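/- arXiv:2202.11808 — 2 statements merged into one kernel-verified Lean document; each statement's English description precedes it below -/
import Mathlib

section
/- Let c, c' ∈ ℤ_{>0}^n be vectors with c'_i ≥ c_i for all i, and let k be a positive integer with k < c_1+⋯+c_n. Then every coefficient of the Ehrhart polynomial of R_{k,c} is less than or equal to the corresponding coefficient of the Ehrhart polynomial of R_{k,c'}. -/
/-!
For a weight `x` and a set `s`, let `F_c(T) = ∑ σ, ∏_{C cycle of σ} (1 - x ^ c(C)) * T`, summed
over the permutations of `s`, where `c(C) = ∑ i ∈ C, c i`. Inserting a new element `a` into a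
permutation either creates a cycle or adds the weight `c a` to the cycle of some `i`. Hence, by
induction on `s`, the coefficient of `T ^ m` in `F_c` is `(1 - x) ^ m` times a power series with
natural number coefficients, and the same holds for `F_c' - F_c` when `c ≤ c'`.

Expanding the product over cycles gives `F_c` as a sum over the subsets of `s`, which is the
inclusion-exclusion formula for slices of boxes: with `d + 1` coordinates, `d! * [t ^ m] ehr` is the
coefficient of `x ^ (k - 1)` in `(∑ y, (y + 1) ^ m * x ^ y) * [T ^ (m + 1)] F_c`. As
`(∑ y, (y + 1) ^ m * x ^ y) * (1 - x) ^ (m + 1)` is the `m`-th Eulerian polynomial, whose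
coefficients are natural numbers, this is monotone in `c`.
-/

/-- The number of lattice points of the `t`-th dilate of the slice of prism `R_{k,c}`. -/
def sliceCount (n : ℕ) (c : Fin n → ℕ) (k t : ℕ) : ℕ :=
  ((Fintype.piFinset (fun i : Fin n => Finset.range (c i * t + 1))).filter
    (fun x => ∑ i, x i = k * t)).card

namespace PrismSlice

section SignedPochhammer

open Polynomial

/-- The product `∏_{i < j} (i - T) * ∏_{i < r} (T + i)` of two rising factorials, one in `-T` and
one in `T`. Up to a constant it is `T` times a polynomial interpolating binomial coefficients. -/
noncomputable def signedPochhammer (R : Type*) [CommRing R] (j r : ℕ) : R[X] :=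
  (ascPochhammer R j).comp (-X) * ascPochhammer R r

variable {R : Type*} [CommRing R]

theorem signedPochhammer_succ_left (j r : ℕ) :
    signedPochhammer R (j + 1) r = signedPochhammer R j r * ((j : R[X]) - X) := by
  simp only [signedPochhammer, ascPochhammer_succ_right, mul_comp, add_comp, X_comp, natCast_comp]
  ring

theorem signedPochhammer_succ_right (j r : ℕ) :
    signedPochhammer R j (r + 1) = signedPochhammer R j r * (X + (r : R[X])) := by
  rw [signedPochhammer, ascPochhammer_succ_right, ← mul_assoc, signedPochhammer]

theorem signedPochhammer_map {S : Type*} [CommRing S] (f : R →+* S) (j r : ℕ) :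
    (signedPochhammer R j r).map f = signedPochhammer S j r := by
  simp [signedPochhammer, Polynomial.map_comp]

theorem signedPochhammer_eq_ascPochhammer_comp {d j r : ℕ} (h : j + r = d + 1) :
    signedPochhammer R j r =
      C ((-1) ^ j) * (X * (ascPochhammer R d).comp (X - C (j : R) + 1)) := by
  induction j generalizing d with
  | zero =>
    obtain rfl : r = d + 1 := by omega
    simp [signedPochhammer, ascPochhammer_succ_left]
  | succ j ih =>
    rw [signedPochhammer_succ_left]
    cases d with
    | zero =>
      obtain ⟨rfl, rfl⟩ : j = 0 ∧ r = 0 := by omega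
      simp [signedPochhammer]
    | succ d =>
      rw [ih (d := d) (by omega), ascPochhammer_succ_left, mul_comp, comp_assoc]
      have hshift : (X + 1 : R[X]).comp (X - C ((j + 1 : ℕ) : R) + 1) = X - C (j : R) + 1 := by
        simp only [add_comp, X_comp, one_comp, Nat.cast_succ, C_add, C_1]
        ring
      rw [hshift]
      simp only [X_comp, Nat.cast_succ, C_add, C_1, pow_succ, C_mul, C_neg, map_natCast]
      ring

theorem signedPochhammer_eq_preHilbertPoly {F : Type*} [Field F] [CharZero F] {d j r : ℕ}
    (h : j + r = d + 1) :
    signedPochhammer F j r =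
      C ((d.factorial : F) * (-1) ^ j) * (X * preHilbertPoly F d j) := by
  have hd : (d.factorial : F) ≠ 0 := by exact_mod_cast d.factorial_ne_zero
  rw [signedPochhammer_eq_ascPochhammer_comp h, preHilbertPoly, smul_eq_C_mul, C_mul]
  calc _ = C ((d.factorial : F) * (d.factorial : F)⁻¹) * (C ((-1) ^ j) *
        (X * (ascPochhammer F d).comp (X - C (j : F) + 1))) := by
          rw [mul_inv_cancel₀ hd, C_1, one_mul]
    _ = _ := by rw [C_mul]; ring

theorem preHilbertPoly_eval_of_pos {F : Type*} [Field F] [CharZero F] {d j N : ℕ} (hN : 0 < N)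
    (hj : j ≤ d + 1) :
    (preHilbertPoly F d j).eval (N : F) = if j ≤ N then ((N - j + d).choose d : F) else 0 := by
  split_ifs with h
  · exact preHilbertPoly_eq_choose_sub_add F d h
  · have hlt : j - 1 - N < d := by omega
    have harg : (N : F) - j + 1 = -((j - 1 - N : ℕ) : F) := by
      rw [Nat.sub_sub, Nat.cast_sub (by omega)]; push_cast; ring
    simp [preHilbertPoly, harg, ascPochhammer_eval_neg_coe_nat_of_lt hlt]

end SignedPochhammer

section WeightedCyclePoly

open Polynomial Finset

variable {R ι : Type*} [CommRing R] [DecidableEq ι]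

/-- The generating polynomial `∑ σ, ∏_{C cycle of σ} (1 - x ^ c(C)) * T` of the permutations `σ` of
`s`, where `c(C) = ∑ i ∈ C, c i`. It is encoded by its expansion over the set `A` covered by the
cycles contributing `-x ^ c(C) * T`: by the cycle-counting property of the rising factorial,
`signedPochhammer` sums over the permutations that preserve `A`. -/
noncomputable def weightedCyclePoly (x : R) (s : Finset ι) (c : ι → ℕ) : R[X] :=
  ∑ A ∈ s.powerset, C (x ^ ∑ i ∈ A, c i) * signedPochhammer R #A #(s \ A)

theorem weightedCyclePoly_empty (x : R) (c : ι → ℕ) : weightedCyclePoly x ∅ c = 1 := by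
  simp [weightedCyclePoly, signedPochhammer]

theorem sum_weightedCyclePoly_add_single (x : R) (s : Finset ι) (c : ι → ℕ) (w : ℕ) :
    ∑ i ∈ s, weightedCyclePoly x s (c + Pi.single i w) =
      ∑ A ∈ s.powerset, C (x ^ ∑ i ∈ A, c i) * signedPochhammer R #A #(s \ A) *
        (#(s \ A) + #A * C (x ^ w)) := by
  simp only [weightedCyclePoly]
  rw [sum_comm]
  refine sum_congr rfl fun A hA ↦ ?_
  have hsum : ∑ i ∈ s, C (x ^ if i ∈ A then w else 0) = (#(s \ A) + #A * C (x ^ w) : R[X]) := by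
    simp only [apply_ite, pow_zero, C_1, sum_ite, sum_const, nsmul_eq_mul, mul_one,
      filter_mem_eq_inter, filter_notMem_eq_sdiff, inter_eq_right.mpr (mem_powerset.mp hA)]
    ring
  simp only [Pi.add_apply, sum_add_distrib, sum_pi_single', pow_add, C_mul, ← hsum, mul_sum]
  exact sum_congr rfl fun i _ ↦ mul_right_comm _ _ _

/-- The first term accounts for the permutations in which `a` is a fixed point, the `i`-th summand
for those obtained by inserting `a` after `i` in its cycle. -/
theorem weightedCyclePoly_insert (x : R) {s : Finset ι} {a : ι} (ha : a ∉ s) (c : ι → ℕ) :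
    weightedCyclePoly x (insert a s) c =
      C (1 - x ^ c a) * X * weightedCyclePoly x s c +
        ∑ i ∈ s, weightedCyclePoly x s (c + Pi.single i (c a)) := by
  rw [sum_weightedCyclePoly_add_single, weightedCyclePoly, sum_powerset_insert ha,
    weightedCyclePoly, mul_sum, ← sum_add_distrib, ← sum_add_distrib]
  refine sum_congr rfl fun A hA ↦ ?_
  have haA : a ∉ A := fun h ↦ ha (mem_powerset.mp hA h)
  rw [insert_sdiff_of_notMem _ haA, insert_sdiff_insert, sdiff_insert_of_notMem ha,
    card_insert_of_notMem haA, card_insert_of_notMem (fun h ↦ ha (mem_sdiff.mp h).1),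
    sum_insert haA, signedPochhammer_succ_left, signedPochhammer_succ_right, pow_add]
  simp only [C_mul, C_sub, C_1]
  ring

end WeightedCyclePoly

section ScaledNonneg

open PowerSeries Finset

/-- The polynomials `∑ m, (1 - X) ^ m * h_m * T ^ m` over `ℚ⟦X⟧` in which every `h_m` has natural
number coefficients. -/
noncomputable def scaledNonneg : Subsemiring (Polynomial ℚ⟦X⟧) :=
  (Polynomial.eval₂RingHom (Polynomial.C.comp (PowerSeries.map (Nat.castRingHom ℚ)))
    (Polynomial.C (1 - X) * Polynomial.X)).rangeS

theorem exists_coeff_eq_of_mem_scaledNonneg {f : Polynomial ℚ⟦X⟧} (hf : f ∈ scaledNonneg) (m : ℕ) :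
    ∃ h : ℕ⟦X⟧, f.coeff m = (1 - X) ^ m * h.map (Nat.castRingHom ℚ) := by
  obtain ⟨H, rfl⟩ := hf
  refine ⟨H.coeff m, ?_⟩
  rw [Polynomial.coe_eval₂RingHom, ← Polynomial.eval₂_map, ← Polynomial.comp,
    Polynomial.comp_C_mul_X_coeff, Polynomial.coeff_map, mul_comm]

theorem C_X_pow_mem_scaledNonneg (a : ℕ) : Polynomial.C (X ^ a) ∈ scaledNonneg :=
  ⟨Polynomial.C (X ^ a), by
    rw [Polynomial.coe_eval₂RingHom, Polynomial.eval₂_C, RingHom.comp_apply, map_pow,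
      PowerSeries.map_X]⟩

theorem C_one_sub_X_pow_mul_X_mem_scaledNonneg (a : ℕ) :
    Polynomial.C (1 - X ^ a) * Polynomial.X ∈ scaledNonneg := by
  refine ⟨Polynomial.C (∑ i ∈ range a, X ^ i) * Polynomial.X, ?_⟩
  rw [← mul_neg_geom_sum, map_mul, Polynomial.coe_eval₂RingHom, Polynomial.eval₂_C,
    Polynomial.eval₂_X, RingHom.comp_apply, map_sum, Polynomial.C_mul]
  simp only [map_pow, PowerSeries.map_X]
  ring

theorem C_X_pow_sub_X_pow_mul_X_mem_scaledNonneg {a b : ℕ} (hab : a ≤ b) :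
    Polynomial.C (X ^ a - X ^ b) * Polynomial.X ∈ scaledNonneg := by
  have hfactor : (X ^ a - X ^ b : ℚ⟦X⟧) = X ^ a * (1 - X ^ (b - a)) := by
    rw [mul_sub, mul_one, ← pow_add, Nat.add_sub_cancel' hab]
  rw [hfactor, Polynomial.C_mul, mul_assoc]
  exact mul_mem (C_X_pow_mem_scaledNonneg a) (C_one_sub_X_pow_mul_X_mem_scaledNonneg _)

variable {ι : Type*} [DecidableEq ι]

theorem weightedCyclePoly_mem_scaledNonneg (s : Finset ι) (c : ι → ℕ) :
    weightedCyclePoly X s c ∈ scaledNonneg := by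
  induction s using Finset.induction generalizing c with
  | empty => exact weightedCyclePoly_empty (X : ℚ⟦X⟧) c ▸ one_mem _
  | insert a s ha ih =>
    rw [weightedCyclePoly_insert _ ha]
    exact add_mem (mul_mem (C_one_sub_X_pow_mul_X_mem_scaledNonneg _) (ih c))
      (sum_mem fun i _ ↦ ih _)

theorem weightedCyclePoly_sub_mem_scaledNonneg (s : Finset ι) {c c' : ι → ℕ} (h : c ≤ c') :
    weightedCyclePoly X s c' - weightedCyclePoly X s c ∈ scaledNonneg := by
  induction s using Finset.induction generalizing c c' with
  | empty => simp only [weightedCyclePoly_empty, sub_self, zero_mem]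
  | insert a s ha ih =>
    have hsplit : weightedCyclePoly X (insert a s) c' - weightedCyclePoly X (insert a s) c =
        Polynomial.C (1 - X ^ c' a) * Polynomial.X *
            (weightedCyclePoly X s c' - weightedCyclePoly X s c) +
          Polynomial.C (X ^ c a - X ^ c' a) * Polynomial.X * weightedCyclePoly (X : ℚ⟦X⟧) s c +
          ∑ i ∈ s, (weightedCyclePoly X s (c' + Pi.single i (c' a)) -
            weightedCyclePoly X s (c + Pi.single i (c a))) := by
      rw [weightedCyclePoly_insert _ ha, weightedCyclePoly_insert _ ha, sum_sub_distrib]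
      simp only [Polynomial.C_sub]
      ring
    rw [hsplit]
    refine add_mem (add_mem ?_ ?_) (sum_mem fun i _ ↦ ih ?_)
    · exact mul_mem (C_one_sub_X_pow_mul_X_mem_scaledNonneg _) (ih h)
    · exact mul_mem (C_X_pow_sub_X_pow_mul_X_mem_scaledNonneg (h a))
        (weightedCyclePoly_mem_scaledNonneg s c)
    · exact add_le_add h (Pi.single_mono _ (h a))

end ScaledNonneg

section Eulerian

open PowerSeries

/-- The Eulerian number `A(m, y)`, the number of permutations of `m` elements with `y` descents.
The truncated subtraction `m - y` is harmless because `A(m, y) = 0` for `m < y`. -/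
def eulerian : ℕ → ℕ → ℕ
  | 0, 0 => 1
  | 0, _ + 1 => 0
  | m + 1, 0 => eulerian m 0
  | m + 1, y + 1 => (y + 2) * eulerian m (y + 1) + (m - y) * eulerian m y

theorem eulerian_eq_zero_of_lt {m y : ℕ} (h : m < y) : eulerian m y = 0 := by
  induction m generalizing y with
  | zero =>
    obtain ⟨y, rfl⟩ := Nat.exists_eq_succ_of_ne_zero h.ne'
    rfl
  | succ m ih =>
    obtain ⟨y, rfl⟩ := Nat.exists_eq_succ_of_ne_zero (Nat.zero_lt_of_lt h).ne'
    rw [eulerian, ih (by omega), ih (by omega), mul_zero, mul_zero, add_zero]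

variable {R : Type*} [CommRing R]

theorem cast_eulerian_succ_succ (m y : ℕ) :
    (eulerian (m + 1) (y + 1) : R) = (y + 2) * eulerian m (y + 1) + (m - y) * eulerian m y := by
  rcases le_or_gt y m with hy | hy
  · rw [eulerian]
    push_cast [Nat.cast_sub hy]
    ring
  · rw [eulerian_eq_zero_of_lt (by omega : m + 1 < y + 1), eulerian_eq_zero_of_lt hy,
      eulerian_eq_zero_of_lt (by omega : m < y + 1)]
    simp

theorem mk_eulerian_succ (m : ℕ) :
    (mk fun y ↦ (eulerian (m + 1) y : R)) =
      (1 + (m : R⟦X⟧) * X) * (mk fun y ↦ (eulerian m y : R)) +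
        X * (1 - X) * derivative R (mk fun y ↦ (eulerian m y : R)) := by
  set E : R⟦X⟧ := mk fun y ↦ (eulerian m y : R)
  have hexpand : (1 + (m : R⟦X⟧) * X) * E + X * (1 - X) * derivative R E =
      E + X * (C (m : R) * E + derivative R E - X * derivative R E) := by
    rw [map_natCast]; ring
  ext y
  rw [hexpand, map_add]
  rcases y with _ | y
  · simp [E, eulerian]
  · have hXderiv : coeff y (X * derivative R E) = y * coeff y E := by
      rcases y with _ | y
      · simp
      · rw [coeff_succ_X_mul, coeff_derivative, mul_comm, Nat.cast_succ]
    rw [coeff_succ_X_mul, map_sub, map_add, hXderiv, coeff_derivative, coeff_C_mul]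
    simp only [E, coeff_mk, cast_eulerian_succ_succ]
    ring

theorem mk_succ_pow_succ (m : ℕ) :
    (mk fun y ↦ ((y : R) + 1) ^ (m + 1)) =
      derivative R (X * mk fun y ↦ ((y : R) + 1) ^ m) := by
  ext y
  rw [coeff_derivative, coeff_succ_X_mul, coeff_mk, coeff_mk, pow_succ]

theorem mk_succ_pow_mul_one_sub_pow (m : ℕ) :
    (mk fun y ↦ ((y : R) + 1) ^ m) * (1 - X) ^ (m + 1) = mk fun y ↦ (eulerian m y : R) := by
  induction m with
  | zero =>
    have hone : (mk fun y ↦ ((y : R) + 1) ^ 0) = mk 1 := by ext; simp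
    rw [hone, zero_add, pow_one, mk_one_mul_one_sub_eq_one]
    ext y
    cases y <;> simp [eulerian, coeff_one]
  | succ m ih =>
    rw [mk_eulerian_succ, ← ih, mk_succ_pow_succ]
    simp only [Derivation.leibniz, Derivation.leibniz_pow, map_sub, derivative_X, smul_eq_mul,
      nsmul_eq_mul, add_tsub_cancel_right, Nat.cast_succ, Derivation.map_one_eq_zero]
    ring

theorem coeff_mk_succ_pow_mul_coeff_nonneg {f : Polynomial ℚ⟦X⟧} (hf : f ∈ scaledNonneg) (k m : ℕ) :
    0 ≤ coeff k ((mk fun y ↦ ((y : ℚ) + 1) ^ m) * f.coeff (m + 1)) := by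
  obtain ⟨h, hh⟩ := exists_coeff_eq_of_mem_scaledNonneg hf (m + 1)
  rw [hh, ← mul_assoc, mk_succ_pow_mul_one_sub_pow, coeff_mul]
  refine Finset.sum_nonneg fun x _ ↦ ?_
  rw [coeff_mk, coeff_map]
  exact mul_nonneg (Nat.cast_nonneg _) (Nat.cast_nonneg _)

end Eulerian

section LatticePoints

open PowerSeries Finset

variable {ι : Type*} [Fintype ι] {R : Type*} [CommRing R]

theorem natCast_card_filter_piFinset_sum_eq [DecidableEq ι] (A : ι → Finset ℕ) (s : ℕ) :
    (#{x ∈ Fintype.piFinset A | ∑ i, x i = s} : R) =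
      coeff s (∏ i, ∑ a ∈ A i, (X : R⟦X⟧) ^ a) := by
  simp only [prod_univ_sum, map_sum, prod_pow_eq_pow_sum, coeff_X_pow, card_filter, Nat.cast_sum,
    Nat.cast_ite, Nat.cast_one, Nat.cast_zero, eq_comm]

theorem geom_sum_eq_one_sub_X_pow_mul (a : ℕ) :
    ∑ i ∈ range a, (X : R⟦X⟧) ^ i = (1 - X ^ a) * PowerSeries.mk 1 := by
  rw [← mul_neg_geom_sum, mul_comm (1 - X), mul_assoc, mul_comm (1 - X), mk_one_mul_one_sub_eq_one,
    mul_one]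

theorem coeff_prod_geom_sum {d : ℕ} (hι : Fintype.card ι = d + 1) (u : ι → ℕ) (s : ℕ) :
    coeff s (∏ i, ∑ a ∈ range (u i), (X : R⟦X⟧) ^ a) =
      ∑ A : Finset ι, (-1) ^ #A *
        if ∑ i ∈ A, u i ≤ s then ((d + (s - ∑ i ∈ A, u i)).choose d : R) else 0 := by
  classical
  simp only [geom_sum_eq_one_sub_X_pow_mul, prod_mul_distrib, prod_const, card_univ, hι,
    mk_one_pow_eq_mk_choose_add, prod_sub, powerset_univ, one_pow, mul_one,
    prod_pow_eq_pow_sum, sum_mul, map_sum]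
  refine sum_congr rfl fun A _ ↦ ?_
  have hsign : ((-1) ^ #A : R⟦X⟧) = C ((-1) ^ #A) := by simp
  rw [hsign, mul_assoc, coeff_C_mul, coeff_X_pow_mul', coeff_mk]

end LatticePoints

section EhrhartPoly

open PowerSeries Finset

variable {ι : Type*} [Fintype ι]

/-- For `0 < k`, the Ehrhart polynomial of the slice `{x | 0 ≤ x i ≤ c i, ∑ i, x i = k}` of a box
with `d + 1` coordinates, as given by inclusion-exclusion over the set `A` of coordinates that
exceed their upper bound, which forces `∑ i ∈ A, c i < k`. -/
noncomputable def ehrhartPoly (d k : ℕ) (c : ι → ℕ) : Polynomial ℚ :=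
  ∑ A : Finset ι with ∑ i ∈ A, c i < k, Polynomial.C ((-1) ^ #A) *
    (Polynomial.preHilbertPoly ℚ d #A).comp
      (Polynomial.C ((k : ℚ) - ∑ i ∈ A, c i) * Polynomial.X)

theorem preHilbertPoly_comp_eval {F : Type*} [Field F] [CharZero F] {d j u k t : ℕ}
    (hu : u < k) (ht : 0 < t) (hj : j ≤ d + 1) :
    ((Polynomial.preHilbertPoly F d j).comp (Polynomial.C ((k : F) - u) * Polynomial.X)).eval
        (t : F) =
      if u * t + j ≤ k * t then ((d + (k * t - (u * t + j))).choose d : F) else 0 := by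
  obtain ⟨v, rfl⟩ := Nat.exists_eq_add_of_lt hu
  have harg : ((u + v + 1 : ℕ) - u : F) * t = ((v + 1) * t : ℕ) := by push_cast; ring
  have hsplit : (u + v + 1) * t = u * t + (v + 1) * t := by ring
  rw [Polynomial.eval_comp, Polynomial.eval_mul, Polynomial.eval_C, Polynomial.eval_X, harg,
    preHilbertPoly_eval_of_pos (by positivity) hj, hsplit, Nat.add_sub_add_left, Nat.add_comm d]
  simp only [Nat.add_le_add_iff_left]

theorem ehrhartPoly_eval [DecidableEq ι] {d k t : ℕ} (hι : Fintype.card ι = d + 1)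
    (hk : 0 < k) (ht : 0 < t) (c : ι → ℕ) :
    (ehrhartPoly d k c).eval (t : ℚ) =
      #{x ∈ Fintype.piFinset fun i ↦ range (c i * t + 1) | ∑ i, x i = k * t} := by
  rw [natCast_card_filter_piFinset_sum_eq, coeff_prod_geom_sum hι, ehrhartPoly, sum_filter,
    Polynomial.eval_finsetSum]
  refine sum_congr rfl fun A _ ↦ ?_
  have hcard : #A ≤ d + 1 := hι ▸ card_le_univ A
  have hsum : ∑ i ∈ A, (c i * t + 1) = (∑ i ∈ A, c i) * t + #A := by
    rw [sum_add_distrib, sum_mul, card_eq_sum_ones]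
  rw [hsum]
  by_cases hA : ∑ i ∈ A, c i < k
  · rw [if_pos hA, Polynomial.eval_C_mul, preHilbertPoly_comp_eval hA ht hcard]
  · rw [if_neg hA, if_neg, Polynomial.eval_zero, mul_zero]
    intro hle
    have hkt : k * t ≤ (∑ i ∈ A, c i) * t := Nat.mul_le_mul_right t (not_lt.mp hA)
    obtain rfl : A = ∅ := card_eq_zero.mp (by omega)
    exact hA (by rwa [sum_empty])

theorem factorial_mul_coeff_ehrhartPoly [DecidableEq ι] {d : ℕ} (hι : Fintype.card ι = d + 1)
    (k m : ℕ) (c : ι → ℕ) :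
    d.factorial * (ehrhartPoly d (k + 1) c).coeff m =
      coeff k ((mk fun y ↦ ((y : ℚ) + 1) ^ m) * (weightedCyclePoly X univ c).coeff (m + 1)) := by
  simp only [ehrhartPoly, weightedCyclePoly, Polynomial.finsetSum_coeff, sum_filter, mul_sum,
    powerset_univ, map_sum]
  refine sum_congr rfl fun A _ ↦ ?_
  have hcard : #A + #(univ \ A) = d + 1 := by
    rw [add_comm, card_sdiff_add_card_eq_card (subset_univ A), card_univ, hι]
  rw [← signedPochhammer_map (C : ℚ →+* ℚ⟦X⟧), signedPochhammer_eq_preHilbertPoly hcard,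
    Polynomial.coeff_C_mul, Polynomial.coeff_map, Polynomial.coeff_C_mul, Polynomial.coeff_X_mul,
    mul_left_comm, coeff_X_pow_mul', coeff_mul_C, coeff_mk]
  simp only [Nat.lt_succ_iff]
  split_ifs with hA
  · rw [Polynomial.coeff_C_mul, Polynomial.comp_C_mul_X_coeff, Nat.cast_sub hA]
    push_cast
    ring
  · rw [Polynomial.coeff_zero, mul_zero]

theorem coeff_ehrhartPoly_mono {d k : ℕ} (hι : Fintype.card ι = d + 1) (hk : 0 < k)
    {c c' : ι → ℕ} (h : c ≤ c') (m : ℕ) :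
    (ehrhartPoly d k c).coeff m ≤ (ehrhartPoly d k c').coeff m := by
  classical
  obtain ⟨k, rfl⟩ := Nat.exists_eq_succ_of_ne_zero hk.ne'
  have hdiff := coeff_mk_succ_pow_mul_coeff_nonneg
    (weightedCyclePoly_sub_mem_scaledNonneg univ h) k m
  rw [Polynomial.coeff_sub, mul_sub, map_sub, ← factorial_mul_coeff_ehrhartPoly hι,
    ← factorial_mul_coeff_ehrhartPoly hι, sub_nonneg] at hdiff
  exact le_of_mul_le_mul_left hdiff (by exact_mod_cast d.factorial_pos)

end EhrhartPoly

theorem eq_of_forall_pos_eval_natCast_eq {R : Type*} [CommRing R] [IsDomain R] [CharZero R]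
    {p q : Polynomial R} (h : ∀ t : ℕ, 0 < t → p.eval (t : R) = q.eval (t : R)) : p = q := by
  refine Polynomial.eq_of_infinite_eval_eq p q ?_
  refine ((Set.Ioi_infinite 0).image (Nat.cast_injective (R := R)).injOn).mono ?_
  rintro _ ⟨t, ht, rfl⟩
  exact h t ht

end PrismSlice

/-- Taking `c = 0` gives Ehrhart positivity: the coefficients of `q` are nonnegative. -/
theorem stmt14_general (n k : ℕ) (c c' : Fin n → ℕ) (hcc : ∀ i, c i ≤ c' i) (hk0 : 0 < k)
    (p q : Polynomial ℚ)
    (hp : ∀ t : ℕ, 0 < t → p.eval (t : ℚ) = sliceCount n c k t)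
    (hq : ∀ t : ℕ, 0 < t → q.eval (t : ℚ) = sliceCount n c' k t) :
    ∀ m, p.coeff m ≤ q.coeff m := by
  cases n with
  | zero =>
    obtain rfl : c = c' := Subsingleton.elim c c'
    have hpq : p = q := PrismSlice.eq_of_forall_pos_eval_natCast_eq fun t ht ↦
      (hp t ht).trans (hq t ht).symm
    exact fun m ↦ hpq ▸ le_rfl
  | succ d =>
    have hd : Fintype.card (Fin (d + 1)) = d + 1 := Fintype.card_fin _
    have hp_eq : p = PrismSlice.ehrhartPoly d k c :=
      PrismSlice.eq_of_forall_pos_eval_natCast_eq fun t ht ↦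
        (hp t ht).trans (PrismSlice.ehrhartPoly_eval hd hk0 ht c).symm
    have hq_eq : q = PrismSlice.ehrhartPoly d k c' :=
      PrismSlice.eq_of_forall_pos_eval_natCast_eq fun t ht ↦
        (hq t ht).trans (PrismSlice.ehrhartPoly_eval hd hk0 ht c').symm
    rw [hp_eq, hq_eq]
    exact PrismSlice.coeff_ehrhartPoly_mono hd hk0 hcc

theorem stmt14 (n k : ℕ) (c c' : Fin n → ℕ) (hc : ∀ i, 0 < c i)
    (hcc : ∀ i, c i ≤ c' i) (hk0 : 0 < k) (hk : k < ∑ i, c i)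
    (p q : Polynomial ℚ)
    (hp : ∀ t : ℕ, 0 < t → p.eval (t : ℚ) = sliceCount n c k t)
    (hq : ∀ t : ℕ, 0 < t → q.eval (t : ℚ) = sliceCount n c' k t) :
    ∀ m, p.coeff m ≤ q.coeff m :=
  stmt14_general n k c c' hcc hk0 p q hp hq
end

section
/- For positive integers k ≤ n, the normalized volume of the hypersimplex Δ_{k,n} = {x ∈ [0,1]^n : ∑ x_i = k} equals the Eulerian number A(n−1, k−1), i.e., (n−1)! · vol(Δ_{k,n}) = #{σ ∈ S_{n−1} : σ has exactly k−1 descents}, where vol is the (n−1)-dimensional volume computed in the lattice induced on the hyperplane ∑ x_i = k. -/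
open scoped Classical

/-- The number of descents of a permutation `σ` of `Fin m`. -/
noncomputable def descNum {m : ℕ} (σ : Equiv.Perm (Fin m)) : ℕ :=
  (Finset.univ.filter
    (fun j : Fin m => ∃ h : (j : ℕ) + 1 < m, σ ⟨(j : ℕ) + 1, h⟩ < σ j)).card

/-- The Eulerian number `A(m,i)`. -/
noncomputable def eulerian (m i : ℕ) : ℕ :=
  Nat.card {σ : Equiv.Perm (Fin m) // descNum σ = i}

/-!
A lattice point of `t • Δ_{k+1,m+1}` is determined by its last `m` coordinates, so up to
boundary effects these points correspond to the words `x ∈ {0, …, t-1} ^ m` with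
`⌊(∑ x) / t⌋ = k`. This floor counts the carries made while adding the letters of `x` modulo `t`,
and a carry occurs exactly where the running sum modulo `t` descends. Passing to running sums is
a bijection (Stanley), so there are as many such words as words with `k` descents. A word
without repeated letters consists of its relative order, a permutation with the same
descents, and its set of letters; hence there are `A(m, k) * t.choose m` of them, and words
with a repeated letter are negligible. The number of lattice points is therefore asymptotic
to `A(m, k) * t ^ m / m!`, which identifies the coefficient of `t ^ m`.
-/

open Asymptotics Filter Finset Topology
open scoped Nat Polynomial

section Descents

variable {m : ℕ} {α β : Type*}

/-- The number of descents of a word `y`, extending `descNum` from permutations to words over an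
arbitrary ordered alphabet. -/
noncomputable def numDescents [LT α] (y : Fin m → α) : ℕ :=
  #{j : Fin m | ∃ h : (j : ℕ) + 1 < m, y ⟨j + 1, h⟩ < y j}

lemma descNum_eq_numDescents (σ : Equiv.Perm (Fin m)) : descNum σ = numDescents σ := by
  unfold descNum numDescents
  congr!

lemma numDescents_eq_card [Preorder α] (y : Fin (m + 1) → α) :
    numDescents y = #{i : Fin m | y i.succ < y i.castSucc} := by
  simp only [numDescents, card_filter, Fin.sum_univ_castSucc]
  simp [Fin.succ]

lemma numDescents_le [Preorder α] (y : Fin (m + 1) → α) : numDescents y ≤ m := by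
  simpa [numDescents_eq_card] using card_filter_le univ fun i : Fin m ↦ y i.succ < y i.castSucc

lemma eulerian_self (m : ℕ) : eulerian m m = if m = 0 then 1 else 0 := by
  obtain _ | m := m
  · simp [eulerian, descNum]
  · have hne (σ : Equiv.Perm (Fin (m + 1))) : descNum σ ≠ m + 1 :=
      ((descNum_eq_numDescents σ).trans_le (numDescents_le σ)).trans_lt (lt_add_one m) |>.ne
    simp [eulerian, hne]

lemma numDescents_cons_of_le [Preorder α] {a : α} {y : Fin m → α} (ha : ∀ i, a ≤ y i) :
    numDescents (Fin.cons a y : Fin (m + 1) → α) = numDescents y := by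
  have hzero (h : 0 + 1 < m + 1) :
      ¬ (Fin.cons a y : Fin (m + 1) → α) ⟨0 + 1, h⟩ < (Fin.cons a y : Fin (m + 1) → α) 0 :=
    (ha ⟨0, by lia⟩).not_gt
  have hsucc (i : Fin m) (h : (i : ℕ) + 1 + 1 < m + 1) :
      (Fin.cons a y : Fin (m + 1) → α) ⟨i + 1 + 1, h⟩ = y ⟨i + 1, by lia⟩ := rfl
  unfold numDescents
  rw [Fin.card_filter_univ_succ, if_neg (by simpa using hzero)]
  simp [hsucc]

lemma numDescents_strictMono_comp [LinearOrder α] [Preorder β] {f : α → β} (hf : StrictMono f)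
    (y : Fin m → α) : numDescents (f ∘ y) = numDescents y := by
  simp only [numDescents, Function.comp_apply, hf.lt_iff_lt]
  congr!

end Descents

section Standardization

variable {m : ℕ} {α : Type*} [LinearOrder α]

/-- Standardization: an injective word factors uniquely as a permutation, recording the relative
order of its letters, followed by the increasing enumeration of the letters. -/
noncomputable def permProdOrderEmbeddingEquiv :
    Equiv.Perm (Fin m) × (Fin m ↪o α) ≃ (Fin m ↪ α) where
  toFun p := p.1.toEmbedding.trans p.2.toEmbedding
  invFun y := ((Tuple.sort y)⁻¹, OrderEmbedding.ofStrictMono (y ∘ Tuple.sort y)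
    ((Tuple.monotone_sort y).strictMono_of_injective
      (y.injective.comp (Tuple.sort y).injective)))
  left_inv p := by
    obtain ⟨σ, f⟩ := p
    set y : Fin m ↪ α := σ.toEmbedding.trans f.toEmbedding with hy
    have hσ : y ∘ ⇑σ⁻¹ = f := by ext i; simp [hy]
    have hcomp : y ∘ Tuple.sort y = y ∘ ⇑σ⁻¹ :=
      Tuple.unique_monotone (Tuple.monotone_sort y) (hσ ▸ f.monotone)
    have hsort : Tuple.sort y = σ⁻¹ := Equiv.coe_fn_injective (y.injective.comp_left hcomp)
    refine Prod.ext (inv_eq_iff_eq_inv.mpr hsort) (DFunLike.coe_injective ?_)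
    rw [OrderEmbedding.coe_ofStrictMono, hcomp, hσ]
  right_inv y := by ext i; simp

lemma card_orderEmbedding_fin [Fintype α] :
    Nat.card (Fin m ↪o α) = (Fintype.card α).choose m := by
  rw [Nat.card_congr Set.powersetCard.ofFinEmbEquiv, Set.powersetCard.card,
    Nat.card_eq_fintype_card]

lemma card_embedding_numDescents_eq [Fintype α] (d : ℕ) :
    Nat.card {y : Fin m ↪ α // numDescents y = d} = eulerian m d * (Fintype.card α).choose m := by
  rw [← card_orderEmbedding_fin, eulerian, ← Nat.card_prod]
  refine Nat.card_congr (Equiv.symm ?_)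
  refine (Equiv.prodSubtypeFstEquivSubtypeProd (p := fun σ ↦ descNum σ = d)).symm.trans
    (permProdOrderEmbeddingEquiv.subtypeEquiv fun p ↦ ?_)
  rw [descNum_eq_numDescents, ← numDescents_strictMono_comp p.2.strictMono]
  rfl

lemma card_injective_numDescents_eq [Fintype α] (d : ℕ) :
    #{y : Fin m → α | y.Injective ∧ numDescents y = d} =
      eulerian m d * (Fintype.card α).choose m := by
  rw [← card_embedding_numDescents_eq, ← Fintype.card_subtype, ← Nat.card_eq_fintype_card]
  exact Nat.card_congr ((Equiv.subtypeSubtypeEquivSubtypeInter _ _).symm.trans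
    ((Equiv.subtypeInjectiveEquivEmbedding _ _).subtypeEquiv fun _ ↦ Iff.rfl))

lemma card_injective_eq_descFactorial [Fintype α] :
    #{y : Fin m → α | y.Injective} = (Fintype.card α).descFactorial m := by
  rw [← Fintype.card_subtype, Fintype.card_congr (Equiv.subtypeInjectiveEquivEmbedding _ _),
    Fintype.card_embedding_eq, Fintype.card_fin]

lemma eulerian_mul_choose_le_card_numDescents_eq [Fintype α] (d : ℕ) :
    eulerian m d * (Fintype.card α).choose m ≤ #{y : Fin m → α | numDescents y = d} := by
  rw [← card_injective_numDescents_eq]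
  exact card_le_card (monotone_filter_right _ fun _ _ ↦ And.right)

lemma card_numDescents_eq_add_descFactorial_le [Fintype α] (d : ℕ) :
    #{y : Fin m → α | numDescents y = d} + (Fintype.card α).descFactorial m ≤
      eulerian m d * (Fintype.card α).choose m + Fintype.card α ^ m := by
  let D : Finset (Fin m → α) := {y | numDescents y = d}
  let I : Finset (Fin m → α) := {y | y.Injective}
  have hunion : #(D ∪ I) ≤ Fintype.card α ^ m := by simpa using card_le_univ (D ∪ I)
  have hinter : #(D ∩ I) = eulerian m d * (Fintype.card α).choose m := by
    rw [← card_injective_numDescents_eq, inter_comm, ← filter_and]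
  rw [← card_injective_eq_descFactorial, ← card_union_add_card_inter, hinter]
  lia

end Standardization

section Carries

variable {m t : ℕ}

lemma sum_val_sub_eq_numDescents (P : Fin (m + 1) → Fin t) :
    ∑ i : Fin m, ((P i.succ - P i.castSucc : Fin t) : ℤ) =
      P (Fin.last m) - P 0 + t * numDescents P := by
  have telescope : ∑ i : Fin m, ((P i.succ : ℤ) - P i.castSucc) = P (Fin.last m) - P 0 := by
    have := (Fin.sum_univ_castSucc fun i ↦ (P i : ℤ)).symm.trans (Fin.sum_univ_succ _)
    rw [sum_sub_distrib]
    linarith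
  simp only [Fin.intCast_val_sub_eq_sub_add_ite, sum_add_distrib, telescope, numDescents_eq_card,
    ← not_lt, ite_not, Nat.cast_ite, Nat.cast_zero, ← sum_filter, sum_const, nsmul_eq_mul, mul_comm]
  congr!

lemma tail_partialSum_injective {G : Type*} [AddGroup G] :
    Function.Injective fun x : Fin m → G ↦ Fin.tail (Fin.partialSum x) := by
  intro x y h
  have hP : Fin.partialSum x = Fin.partialSum y := by
    rw [← Fin.cons_self_tail (Fin.partialSum x), ← Fin.cons_self_tail (Fin.partialSum y)]
    simp_all
  funext i
  rw [← Fin.partialSum_right_neg x, hP, Fin.partialSum_right_neg]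

variable [NeZero t]

lemma sum_val_div_eq_numDescents (x : Fin m → Fin t) :
    (∑ i, (x i : ℕ)) / t = numDescents (Fin.tail (Fin.partialSum x)) := by
  set P := Fin.partialSum x with hP
  have hdesc : numDescents P = numDescents (Fin.tail P) := by
    conv_lhs => rw [← Fin.cons_self_tail P]
    exact numDescents_cons_of_le fun i ↦ by simp [hP]
  have hx (i : Fin m) : P i.succ - P i.castSucc = x i := by simp [hP, Fin.partialSum_succ]
  have hsum : ∑ i, (x i : ℕ) = P (Fin.last m) + t * numDescents P := by
    have := sum_val_sub_eq_numDescents P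
    simp only [hx, show P 0 = 0 from Fin.partialSum_zero x, Fin.val_zero, Nat.cast_zero,
      sub_zero] at this
    exact_mod_cast this
  rw [hsum, Nat.add_mul_div_left _ _ (NeZero.pos t), Nat.div_eq_of_lt (P _).isLt, zero_add, hdesc]

lemma card_sum_val_div_eq (d : ℕ) :
    #{x : Fin m → Fin t | (∑ i, (x i : ℕ)) / t = d} =
      #{y : Fin m → Fin t | numDescents y = d} := by
  simp only [sum_val_div_eq_numDescents]
  exact card_bijective _ (Finite.injective_iff_bijective.mp tail_partialSum_injective) (by simp)

end Carries

/-- The lattice points of the `t`-th dilate of the hypersimplex `Δ_{k,n}`. -/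
def hypersimplexPoints (n k t : ℕ) : Finset (Fin n → ℕ) :=
  {x ∈ Fintype.piFinset fun _ ↦ range (t + 1) | ∑ i, x i = k * t}

section Hypersimplex

variable {m k t : ℕ}

lemma mem_hypersimplexPoints {n : ℕ} {x : Fin n → ℕ} :
    x ∈ hypersimplexPoints n k t ↔ (∀ i, x i ≤ t) ∧ ∑ i, x i = k * t := by
  simp [hypersimplexPoints]

lemma card_sum_val_div_eq_le_card_hypersimplexPoints [NeZero t] :
    #{x : Fin m → Fin t | (∑ i, (x i : ℕ)) / t = k} ≤
      #(hypersimplexPoints (m + 1) (k + 1) t) := by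
  refine card_le_card_of_injOn
    (fun x ↦ Fin.cons ((k + 1) * t - ∑ i, (x i : ℕ)) fun i ↦ (x i : ℕ)) (fun x hx ↦ ?_) ?_
  · obtain ⟨hlow, hupp⟩ : k * t ≤ ∑ i, (x i : ℕ) ∧ ∑ i, (x i : ℕ) < k * t + t := by
      have := (Nat.div_eq_iff (NeZero.pos t)).mp (mem_filter_univ x |>.mp hx)
      have := NeZero.pos t
      lia
    simp only [mem_coe, mem_hypersimplexPoints, Fin.forall_fin_succ, Fin.cons_zero, Fin.cons_succ,
      Fin.sum_cons, add_one_mul]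
    exact ⟨⟨by lia, fun i ↦ (x i).isLt.le⟩, by lia⟩
  · intro x _ y _ hxy
    funext i
    exact Fin.ext (congrFun hxy i.succ)

-- Dropping the first coordinate leaves the points `y` of `{0, …, t} ^ m` with
-- `k * t ≤ ∑ y ≤ (k + 1) * t`. Adding `k` to each coordinate moves them into the half-open slab
-- of side `t + m`, because `k * (t + m) ≤ k * t + m * k` and
-- `(k + 1) * t + m * k < (k + 1) * (t + m)`.
lemma card_hypersimplexPoints_le_card_sum_val_div_eq (hk : k < m) :
    #(hypersimplexPoints (m + 1) (k + 1) t) ≤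
      #{x : Fin m → Fin (t + m) | (∑ i, (x i : ℕ)) / (t + m) = k} := by
  have hle (x : hypersimplexPoints (m + 1) (k + 1) t) (i) : x.1 i ≤ t :=
    (mem_hypersimplexPoints.mp x.2).1 i
  have hsum (x : hypersimplexPoints (m + 1) (k + 1) t) :
      x.1 0 + ∑ i : Fin m, x.1 i.succ = (k + 1) * t := by
    rw [← Fin.sum_univ_succ, (mem_hypersimplexPoints.mp x.2).2]
  refine card_le_card_of_injective
    (f := fun x ↦ ⟨fun i : Fin m ↦ ⟨x.1 i.succ + k, by grind⟩, ?_⟩) fun x y hxy ↦ ?_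
  · simp only [mem_filter_univ, sum_add_distrib, sum_const, card_univ, Fintype.card_fin,
      smul_eq_mul]
    have := hle x 0
    have := hsum x
    refine Nat.div_eq_of_lt_le ?_ ?_ <;> nlinarith
  · have htail (i : Fin m) : x.1 i.succ = y.1 i.succ := by
      simpa using congrFun (congrArg Subtype.val hxy) i
    have hhead : x.1 0 = y.1 0 := by
      have := hsum x
      simp only [htail] at this
      linarith [hsum y]
    exact Subtype.ext (funext (Fin.cases hhead htail))

lemma card_hypersimplexPoints_self : #(hypersimplexPoints m m t) = 1 := by
  refine card_eq_one.mpr ⟨fun _ ↦ t, Finset.ext fun x ↦ ?_⟩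
  rw [mem_hypersimplexPoints, mem_singleton, funext_iff]
  refine ⟨fun ⟨hle, hsum⟩ i ↦ ?_, fun h ↦ by simp [h]⟩
  have := sum_eq_sum_iff_of_le (fun i (_ : i ∈ univ) ↦ hle i)
  exact (this.mp (by simpa using hsum)) i (mem_univ i)

end Hypersimplex

lemma tendsto_descFactorial_div_pow (m : ℕ) :
    Tendsto (fun t : ℕ ↦ (t.descFactorial m : ℝ) / t ^ m) atTop (𝓝 1) :=
  (isEquivalent_iff_tendsto_one ((eventually_ne_atTop 0).mono fun t ht ↦ by simp [ht])).mp
    (isEquivalent_descFactorial m)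

lemma tendsto_choose_div_pow (m : ℕ) :
    Tendsto (fun t : ℕ ↦ (t.choose m : ℝ) / t ^ m) atTop (𝓝 (1 / m !)) := by
  refine ((tendsto_descFactorial_div_pow m).div_const _).congr fun t ↦ ?_
  rw [Nat.descFactorial_eq_factorial_mul_choose]
  push_cast
  field_simp

lemma tendsto_comp_add_div_pow {f : ℕ → ℝ} {m : ℕ} {c : ℝ}
    (hf : Tendsto (fun t ↦ f t / t ^ m) atTop (𝓝 c)) (a : ℕ) :
    Tendsto (fun t ↦ f (t + a) / t ^ m) atTop (𝓝 c) := by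
  have hratio : Tendsto (fun t : ℕ ↦ ((t + a : ℕ) / t : ℝ) ^ m) atTop (𝓝 1) := by
    have := tendsto_add_mul_div_add_mul_atTop_nhds (a : ℝ) 0 1 one_ne_zero
    simpa [add_comm] using this.pow m
  have hprod := (hf.comp (tendsto_add_atTop_nat a)).mul hratio
  rw [mul_one] at hprod
  refine hprod.congr' ((eventually_ne_atTop 0).mono fun t ht ↦ ?_)
  have : ((t + a : ℕ) : ℝ) ≠ 0 := by positivity
  simp only [Function.comp_apply, div_pow]
  field_simp

lemma tendsto_card_numDescents_eq_div_pow (m d : ℕ) :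
    Tendsto (fun t : ℕ ↦ (#{y : Fin m → Fin t | numDescents y = d} : ℝ) / t ^ m) atTop
      (𝓝 (eulerian m d / m !)) := by
  have hchoose : Tendsto (fun t : ℕ ↦ (eulerian m d * t.choose m : ℝ) / t ^ m) atTop
      (𝓝 (eulerian m d / m !)) := by
    simpa only [mul_div_assoc, mul_one_div] using (tendsto_choose_div_pow m).const_mul _
  have hupper : Tendsto (fun t : ℕ ↦ (eulerian m d * t.choose m : ℝ) / t ^ m +
      (1 - (t.descFactorial m : ℝ) / t ^ m)) atTop (𝓝 (eulerian m d / m !)) := by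
    simpa using hchoose.add ((tendsto_descFactorial_div_pow m).const_sub 1)
  refine tendsto_of_tendsto_of_tendsto_of_le_of_le' hchoose hupper (.of_forall fun t ↦ ?_)
    ((eventually_gt_atTop 0).mono fun t ht ↦ ?_)
  · have := eulerian_mul_choose_le_card_numDescents_eq (m := m) (α := Fin t) d
    rw [Fintype.card_fin] at this
    gcongr
    exact_mod_cast this
  · have := card_numDescents_eq_add_descFactorial_le (m := m) (α := Fin t) d
    rw [Fintype.card_fin] at this
    field_simp
    rw [add_sub]
    exact le_sub_iff_add_le.mpr (mod_cast this)

lemma tendsto_card_sum_val_div_eq_div_pow (m k : ℕ) :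
    Tendsto (fun t : ℕ ↦ (#{x : Fin m → Fin t | (∑ i, (x i : ℕ)) / t = k} : ℝ) / t ^ m) atTop
      (𝓝 (eulerian m k / m !)) := by
  refine (tendsto_card_numDescents_eq_div_pow m k).congr'
    ((eventually_ne_atTop 0).mono fun t ht ↦ ?_)
  have : NeZero t := ⟨ht⟩
  simp only [card_sum_val_div_eq]

lemma tendsto_card_hypersimplexPoints_div_pow {m k : ℕ} (hk : k ≤ m) :
    Tendsto (fun t : ℕ ↦ (#(hypersimplexPoints (m + 1) (k + 1) t) : ℝ) / t ^ m) atTop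
      (𝓝 (eulerian m k / m !)) := by
  obtain rfl | hlt := hk.eq_or_lt
  · simp only [card_hypersimplexPoints_self, Nat.cast_one, eulerian_self]
    obtain rfl | hk := eq_or_ne k 0
    · simp
    · simpa [hk] using tendsto_const_div_pow 1 k hk
  have hlower := tendsto_card_sum_val_div_eq_div_pow m k
  refine tendsto_of_tendsto_of_tendsto_of_le_of_le' hlower (tendsto_comp_add_div_pow hlower m)
    ((eventually_ne_atTop 0).mono fun t ht ↦ ?_) (.of_forall fun t ↦ ?_)
  · have : NeZero t := ⟨ht⟩
    gcongr
    exact card_sum_val_div_eq_le_card_hypersimplexPoints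
  · gcongr
    exact card_hypersimplexPoints_le_card_sum_val_div_eq hlt

lemma coeff_eq_of_tendsto_eval_div_pow {𝕜 ι : Type*} [NormedField 𝕜] [LinearOrder 𝕜]
    [IsStrictOrderedRing 𝕜] [OrderTopology 𝕜] {l : Filter ι} [l.NeBot] {u : ι → 𝕜}
    (hu : Tendsto u l atTop) {p : 𝕜[X]} {m : ℕ} {c : 𝕜}
    (hp : Tendsto (fun i ↦ p.eval (u i) / u i ^ m) l (𝓝 c)) : p.coeff m = c := by
  set q : 𝕜[X] := p - Polynomial.C c * .X ^ m with hq
  have hne : ∀ᶠ i in l, u i ^ m ≠ 0 :=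
    (hu.eventually_ne_atTop 0).mono fun i hi ↦ pow_ne_zero m hi
  have hlittle : (fun i ↦ q.eval (u i)) =o[l] fun i ↦ u i ^ m := by
    rw [isLittleO_iff_tendsto' (hne.mono fun i hi h ↦ absurd h hi)]
    refine (tendsto_sub_nhds_zero_iff.mpr hp).congr' (hne.mono fun i hi ↦ ?_)
    simp [hq, sub_div, hi]
  have hdeg : q.degree < m := by
    by_contra! hle
    have hbig : (fun i ↦ u i ^ m) =O[l] fun i ↦ q.eval (u i) := by
      simpa [Function.comp_def] using ((Polynomial.isBigO_atTop_of_degree_le (.X ^ m) q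
        (by simpa using hle)).comp_tendsto hu)
    exact isLittleO_irrefl hne.frequently (hbig.trans_isLittleO hlittle)
  have := Polynomial.coeff_eq_zero_of_degree_lt hdeg
  simpa [hq, sub_eq_zero] using this

theorem stmt16 (n k : ℕ) (hk0 : 0 < k) (hkn : k ≤ n)
    (p : Polynomial ℚ)
    (hp : ∀ t : ℕ, 0 < t → p.eval (t : ℚ)
      = ((Fintype.piFinset (fun _ : Fin n => Finset.range (t + 1))).filter
          (fun x => ∑ i, x i = k * t)).card) :
    p.coeff (n - 1) = (eulerian (n - 1) (k - 1) : ℚ) / ((n - 1).factorial : ℚ) := by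
  obtain ⟨k, rfl⟩ := Nat.exists_eq_add_one.mpr hk0
  obtain ⟨m, rfl⟩ := Nat.exists_eq_add_one.mpr (hk0.trans_le hkn)
  have hcount : ∀ᶠ t : ℕ in atTop,
      (#(hypersimplexPoints (m + 1) (k + 1) t) : ℝ) / t ^ m =
        (p.map (algebraMap ℚ ℝ)).eval (t : ℝ) / t ^ m := by
    filter_upwards [eventually_gt_atTop 0] with t ht
    rw [Polynomial.eval_natCast_map, hp t ht, map_natCast, hypersimplexPoints]
  have hcoeff := coeff_eq_of_tendsto_eval_div_pow tendsto_natCast_atTop_atTop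
    ((tendsto_card_hypersimplexPoints_div_pow (by lia)).congr' hcount)
  rw [Polynomial.coeff_map, eq_ratCast] at hcoeff
  exact Rat.cast_injective (α := ℝ) (by simpa using hcoeff)
end
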